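/- For every unital additive semigroup Γ ⊆ ℝ (i.e., 0 ∈ Γ and Γ + Γ ⊆ Γ), the Banach space APH_Γ(T) of holomorphic almost periodic functions on the strip T with spectrum contained in Γ has the approximation property. -/

import Mathlib

open Complex Filter Topology Set Metric
open scoped BoundedContinuousFunction

noncomputable section

namespace SAP

variable {B : Type*} [NormedAddCommGroup B] [NormedSpace ℂ B]

def translateR (f : ℝ →ᵇ B) (τ : ℝ) : ℝ →ᵇ B :=
  f.compContinuous ⟨fun x => x + τ, by continuity⟩

def IsAP (f : ℝ →ᵇ B) : Prop := IsCompact (closure (Set.range (translateR f)))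

def meanValueR (g : ℝ → B) : B :=
  haveI : Nonempty B := ⟨0⟩
  limUnder atTop (fun T : ℝ => (2 * T)⁻¹ • ∫ x in (-T)..T, g x)

def bohrCoeffR (g : ℝ → B) (lam : ℝ) : B :=
  meanValueR (fun x => Complex.exp (-(Complex.I * lam * x)) • g x)

def apSpec (g : ℝ → B) : Set ℝ := {lam | bohrCoeffR g lam ≠ 0}

def IsUnitalSemigroup (Γ : Set ℝ) : Prop :=
  (0 : ℝ) ∈ Γ ∧ ∀ a ∈ Γ, ∀ b ∈ Γ, a + b ∈ Γ

def HasApproxProperty (X : Type*) [NormedAddCommGroup X] [NormedSpace ℂ X] : Prop :=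
  ∀ K : Set X, IsCompact K → ∀ ε : ℝ, 0 < ε →
    ∃ T : X →L[ℂ] X, FiniteDimensional ℂ (LinearMap.range (T : X →ₗ[ℂ] X)) ∧
      ∀ x ∈ K, ‖T x - x‖ < ε

/-! ### The strip -/

/-- the closed strip `T = {z : 0 ≤ Im z ≤ π}` -/
def stripSet : Set ℂ := {z | z.im ∈ Set.Icc 0 Real.pi}

/-- the open strip -/
def stripO : Set ℂ := {z | z.im ∈ Set.Ioo 0 Real.pi}

/-- horizontal translation on the strip -/
def stripShift (x : ℝ) : C(stripSet, stripSet) :=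
  ⟨fun z => ⟨(z : ℂ) + (x : ℂ), by
      show ((z : ℂ) + (x : ℂ)).im ∈ Set.Icc 0 Real.pi
      rw [Complex.add_im, Complex.ofReal_im, add_zero]
      exact z.2⟩, by
    apply Continuous.subtype_mk
    exact continuous_subtype_val.add continuous_const⟩

def translateS (f : stripSet →ᵇ B) (x : ℝ) : stripSet →ᵇ B :=
  f.compContinuous (stripShift x)

open scoped Classical in
/-- extension by zero of a function on the strip -/
def stripExt (f : stripSet →ᵇ B) : ℂ → B :=
  fun z => if h : z ∈ stripSet then f ⟨z, h⟩ else 0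

/-- holomorphic almost periodic function on the strip -/
def IsAPH (f : stripSet →ᵇ B) : Prop :=
  DifferentiableOn ℂ (stripExt f) stripO ∧
    IsCompact (closure (Set.range (translateS f)))

/-- a real point, as a point of the strip -/
def realPt (x : ℝ) : stripSet :=
  ⟨(x : ℂ), by simp [stripSet, Real.pi_nonneg]⟩

/-- spectrum of a holomorphic almost periodic function (computed along `ℝ ⊂ T`) -/
def aphSpec (f : stripSet →ᵇ B) : Set ℝ := apSpec (fun x : ℝ => f (realPt x))

/-- the set `APH_Γ(T)` -/
def APHset (Γ : Set ℝ) : Set (stripSet →ᵇ ℂ) := {f | IsAPH f ∧ aphSpec f ⊆ Γ}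

end SAP

namespace SAP

/-! ### Bohr neighbourhoods -/

/-- Orthogonality of the characters of `ℤ / Nℤ`. -/
lemma sum_rootOfUnity_zpow {N : ℕ} {ζ : ℂ} (hζ : IsPrimitiveRoot ζ N) (k : ℤ) :
    ∑ r ∈ Finset.range N, ζ ^ ((r : ℤ) * k) = if (N : ℤ) ∣ k then (N : ℂ) else 0 := by
  have hpow : ∀ r : ℕ, ζ ^ ((r : ℤ) * k) = (ζ ^ k) ^ r := fun r => by
    rw [mul_comm, zpow_mul, zpow_natCast]
  simp_rw [hpow]
  split_ifs with h
  · rw [(hζ.zpow_eq_one_iff_dvd k).2 h]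
    simp
  · have hne : ζ ^ k ≠ 1 := fun h' => h ((hζ.zpow_eq_one_iff_dvd k).1 h')
    have hN : (ζ ^ k) ^ N = 1 := by
      rw [← zpow_natCast, ← zpow_mul, mul_comm, zpow_mul, zpow_natCast, hζ.pow_eq_one, one_zpow]
    rw [geom_sum_eq hne, hN]
    simp

/-- Finite form of Bogoliubov's theorem: a dense set `A` of residues modulo `N` has a large
spectrum of bounded size, which controls the iterated difference set `2A - 2A`. -/
lemma bogoliubov_zmod {N q : ℕ} (hN : N ≠ 0) (A : Finset ℤ) (hA : N ≤ q * A.card)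
    (hinj : ∀ a ∈ A, ∀ b ∈ A, (N : ℤ) ∣ a - b → a = b) :
    ∃ z : Fin (2 * q ^ 2) → Circle, ∀ x : ℤ, (∀ j, 0 ≤ ((z j ^ x : Circle) : ℂ).re) →
      ∃ a ∈ A, ∃ b ∈ A, ∃ c ∈ A, ∃ d ∈ A, (N : ℤ) ∣ a + b - c - d - x := by
  classical
  set ζ : ℂ := Complex.exp (2 * Real.pi * Complex.I / N) with hζdef
  have hζ : IsPrimitiveRoot ζ N := Complex.isPrimitiveRoot_exp N hN
  have hζ0 : ζ ≠ 0 := Complex.exp_ne_zero _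
  have hζn : ‖ζ‖ = 1 := hζ.norm'_eq_one hN
  set w : Circle := ⟨ζ, by simp [Submonoid.unitSphere, hζn]⟩ with hw
  have hwz : ∀ k : ℤ, ((w ^ k : Circle) : ℂ) = ζ ^ k := fun k => by
    rw [Circle.coe_zpow]
  have hconj : ∀ k : ℤ, (starRingEnd ℂ) (ζ ^ k) = ζ ^ (-k) := fun k => by
    rw [← hwz, ← hwz, ← Circle.coe_inv_eq_conj, zpow_neg]
  set F : ℕ → ℂ := fun r => ∑ a ∈ A, ζ ^ ((r : ℤ) * a) with hF
  have hFc : ∀ r, (starRingEnd ℂ) (F r) = ∑ a ∈ A, ζ ^ (-((r : ℤ) * a)) := fun r => by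
    simp only [hF, map_sum, hconj]
  have hN0 : (0 : ℝ) < N := by positivity
  have hqA : (N : ℝ) ≤ q * A.card := by exact_mod_cast hA
  have hcard : (0 : ℝ) < A.card := by
    rcases Nat.eq_zero_or_pos A.card with h | h
    · rw [h] at hA; omega
    · exact_mod_cast h
  have hq : (0 : ℝ) < q := by
    rcases Nat.eq_zero_or_pos q with h | h
    · rw [h] at hA; omega
    · exact_mod_cast h
  have hpars : ∑ r ∈ Finset.range N, ‖F r‖ ^ 2 = N * A.card := by
    have h1 : ∀ r, ((‖F r‖ ^ 2 : ℝ) : ℂ)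
        = ∑ a ∈ A, ∑ b ∈ A, ζ ^ ((r : ℤ) * (a - b)) := fun r => by
      rw [Complex.ofReal_pow, ← Complex.mul_conj', hFc, hF, Finset.sum_mul_sum]
      refine Finset.sum_congr rfl fun a _ => Finset.sum_congr rfl fun b _ => ?_
      rw [← zpow_add₀ hζ0]
      congr 1
      ring
    have h2 : ((∑ r ∈ Finset.range N, ‖F r‖ ^ 2 : ℝ) : ℂ) = ((N * A.card : ℝ) : ℂ) := by
      rw [Complex.ofReal_sum]
      simp_rw [h1]
      rw [Finset.sum_comm]
      have h3 : ∀ a ∈ A, ∑ r ∈ Finset.range N, ∑ b ∈ A, ζ ^ ((r : ℤ) * (a - b)) = N := by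
        intro a ha
        rw [Finset.sum_comm, Finset.sum_eq_single_of_mem a ha]
        · simp
        · intro b hb hba
          rw [sum_rootOfUnity_zpow hζ, if_neg]
          exact fun h => hba (hinj a ha b hb h).symm
      rw [Finset.sum_congr rfl h3]
      simp [mul_comm]
    exact_mod_cast h2
  set τ : ℝ := (A.card : ℝ) ^ 2 / (2 * q) with hτ
  have hτ0 : 0 < τ := by positivity
  set Λ : Finset ℕ := (Finset.range N).filter fun r => τ ≤ ‖F r‖ ^ 2 with hΛ
  have hΛcard : Λ.card ≤ 2 * q ^ 2 := by
    have h1 : (Λ.card : ℝ) * τ ≤ N * A.card := by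
      rw [← hpars, ← nsmul_eq_mul]
      refine (Finset.card_nsmul_le_sum Λ (fun r => ‖F r‖ ^ 2) τ fun r hr => ?_).trans ?_
      · exact (Finset.mem_filter.1 hr).2
      · exact Finset.sum_le_sum_of_subset_of_nonneg (Finset.filter_subset _ _)
          fun _ _ _ => by positivity
    have h2 : (N : ℝ) * A.card ≤ (2 * q ^ 2 : ℝ) * τ := by
      have : (2 * q ^ 2 : ℝ) * τ = q * A.card * A.card := by
        rw [hτ]; field_simp
      rw [this]
      gcongr
    have h3 : (Λ.card : ℝ) ≤ 2 * q ^ 2 := le_of_mul_le_mul_right (h1.trans h2) hτ0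
    exact_mod_cast h3
  have hz : ∃ z : Fin (2 * q ^ 2) → Circle, ∀ r ∈ Λ, ∃ j, z j = w ^ (-(r : ℤ)) := by
    refine ⟨fun j => if h : (j : ℕ) < Λ.card then w ^ (-((Λ.equivFin.symm ⟨j, h⟩ : ℕ) : ℤ)) else 1,
      fun r hr => ⟨⟨Λ.equivFin ⟨r, hr⟩, (Λ.equivFin ⟨r, hr⟩).2.trans_le hΛcard⟩, ?_⟩⟩
    simp
  obtain ⟨z, hz⟩ := hz
  refine ⟨z, fun x hx => ?_⟩
  by_contra! hcon
  have hzero : ∑ r ∈ Finset.range N, ((‖F r‖ ^ 4 : ℝ) : ℂ) * ζ ^ (-((r : ℤ) * x)) = 0 := by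
    have h1 : ∀ r : ℕ, ((‖F r‖ ^ 4 : ℝ) : ℂ) * ζ ^ (-((r : ℤ) * x))
        = ∑ a ∈ A, ∑ b ∈ A, ∑ c ∈ A, ∑ d ∈ A, ζ ^ ((r : ℤ) * (a + b - c - d - x)) := fun r => by
      have : ((‖F r‖ ^ 4 : ℝ) : ℂ)
          = F r * (F r * ((starRingEnd ℂ) (F r) * (starRingEnd ℂ) (F r))) := by
        have := Complex.mul_conj' (F r)
        push_cast
        linear_combination (-((‖F r‖ : ℂ) ^ 2) - F r * (starRingEnd ℂ) (F r)) * this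
      rw [this, hFc, hF]
      have hexp : ∀ a b c d : ℤ, ζ ^ ((r : ℤ) * (a + b - c - d - x)) = ζ ^ ((r : ℤ) * a) *
          (ζ ^ ((r : ℤ) * b) * (ζ ^ (-((r : ℤ) * c)) * (ζ ^ (-((r : ℤ) * d)) *
            ζ ^ (-((r : ℤ) * x))))) := fun a b c d => by
        simp only [← zpow_add₀ hζ0]
        congr 1
        ring
      simp_rw [hexp, ← Finset.mul_sum, ← Finset.sum_mul]
      ring
    simp_rw [h1]
    rw [Finset.sum_comm]
    refine Finset.sum_eq_zero fun a ha => ?_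
    rw [Finset.sum_comm]
    refine Finset.sum_eq_zero fun b hb => ?_
    rw [Finset.sum_comm]
    refine Finset.sum_eq_zero fun c hc => ?_
    rw [Finset.sum_comm]
    refine Finset.sum_eq_zero fun d hd => ?_
    rw [sum_rootOfUnity_zpow hζ, if_neg (hcon a ha b hb c hc d hd)]
  have hre : ∑ r ∈ Finset.range N, ‖F r‖ ^ 4 * (ζ ^ (-((r : ℤ) * x))).re = 0 := by
    have := congrArg Complex.re hzero
    simpa only [Complex.re_sum, Complex.re_ofReal_mul, Complex.zero_re] using this
  have h0N : 0 ∈ Finset.range N := Finset.mem_range.2 (Nat.pos_of_ne_zero hN)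
  have hF0 : ‖F 0‖ = A.card := by simp [hF]
  have hterm : ∀ r ∈ Finset.range N, (if r = 0 then (A.card : ℝ) ^ 4 else 0) - τ * ‖F r‖ ^ 2
      ≤ ‖F r‖ ^ 4 * (ζ ^ (-((r : ℤ) * x))).re := by
    intro r hr
    split_ifs with h
    · subst h
      simp only [Nat.cast_zero, zero_mul, neg_zero, zpow_zero, Complex.one_re, mul_one, hF0]
      have : 0 ≤ τ * (A.card : ℝ) ^ 2 := by positivity
      linarith
    · by_cases hrΛ : r ∈ Λ
      · obtain ⟨j, hj⟩ := hz r hrΛ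
        have h1 := hx j
        rw [hj, ← zpow_mul, hwz, neg_mul] at h1
        have : 0 ≤ ‖F r‖ ^ 4 * (ζ ^ (-((r : ℤ) * x))).re := by positivity
        have : 0 ≤ τ * ‖F r‖ ^ 2 := by positivity
        linarith
      · have h1 : ‖F r‖ ^ 2 < τ := by
          by_contra! h'
          exact hrΛ (Finset.mem_filter.2 ⟨hr, h'⟩)
        have h2 : -1 ≤ (ζ ^ (-((r : ℤ) * x))).re := by
          have := Complex.abs_re_le_norm (ζ ^ (-((r : ℤ) * x)))
          rw [norm_zpow, hζn, one_zpow] at this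
          exact (abs_le.1 this).1
        have h3 : 0 ≤ ‖F r‖ ^ 2 := by positivity
        nlinarith [mul_nonneg h3 h3, mul_nonneg (mul_nonneg h3 h3) (sub_nonneg.2 h2)]
  have hsum := Finset.sum_le_sum hterm
  rw [hre, Finset.sum_sub_distrib, ← Finset.mul_sum, hpars, Finset.sum_ite_eq' _ 0,
    if_pos h0N] at hsum
  have : τ * (N * A.card) ≤ (A.card : ℝ) ^ 4 / 2 := by
    calc τ * (N * A.card) ≤ τ * (q * A.card * A.card) := by gcongr
      _ = (A.card : ℝ) ^ 4 / 2 := by rw [hτ]; field_simp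
  have : 0 < (A.card : ℝ) ^ 4 := by positivity
  linarith


/-- Bogoliubov's theorem for syndetic sets of integers: the iterated difference set contains a
Bohr neighbourhood of `0`. -/
lemma bogoliubov_int (E : Set ℤ) (S : Finset ℤ) (hS : ∀ n : ℤ, ∃ s ∈ S, n - s ∈ E) :
    ∃ (m : ℕ) (z : Fin m → Circle), ∀ x : ℤ, (∀ j, 0 < ((z j ^ x : Circle) : ℂ).re) →
      ∃ a ∈ E, ∃ b ∈ E, ∃ c ∈ E, ∃ d ∈ E, a + b - c - d = x := by
  classical
  obtain ⟨D, hD⟩ : ∃ D : ℕ, ∀ s ∈ S, |s| ≤ D := by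
    refine ⟨S.sup Int.natAbs, fun s hs => ?_⟩
    rw [Int.abs_eq_natAbs]
    exact_mod_cast Finset.le_sup (f := Int.natAbs) hs
  set q := 16 * S.card with hq
  have key : ∀ M : ℕ, D < M → ∃ z : Fin (2 * q ^ 2) → Circle, ∀ x : ℤ, |x| ≤ M →
      (∀ j, 0 ≤ ((z j ^ x : Circle) : ℂ).re) →
      ∃ a ∈ E, ∃ b ∈ E, ∃ c ∈ E, ∃ d ∈ E, a + b - c - d = x := by
    intro M hM
    set A : Finset ℤ := (Finset.Ico (-(M : ℤ)) (2 * M)).filter (· ∈ E) with hA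
    have hcov : Finset.Ico (0 : ℤ) M ⊆ (S ×ˢ A).image fun p => p.1 + p.2 := by
      intro n hn
      obtain ⟨s, hs, hns⟩ := hS n
      have h1 := abs_le.1 (hD s hs)
      rw [Finset.mem_Ico] at hn
      refine Finset.mem_image.2 ⟨(s, n - s), Finset.mem_product.2 ⟨hs, Finset.mem_filter.2
        ⟨Finset.mem_Ico.2 ⟨?_, ?_⟩, hns⟩⟩, by simp⟩ <;> dsimp only <;> omega
    have hcard : M ≤ S.card * A.card := by
      have h1 := (Finset.card_le_card hcov).trans Finset.card_image_le
      rwa [Finset.card_product, Int.card_Ico, sub_zero, Int.toNat_natCast] at h1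
    have hmem : ∀ a ∈ A, a ∈ E ∧ -(M : ℤ) ≤ a ∧ a < 2 * M := fun a ha => by
      obtain ⟨h1, h2⟩ := Finset.mem_filter.1 ha
      exact ⟨h2, Finset.mem_Ico.1 h1⟩
    obtain ⟨z, hz⟩ := bogoliubov_zmod (N := 16 * M) (q := q) (by omega) A
      (by rw [hq, mul_assoc]; omega) (fun a ha b hb hab => by
        have h1 := hmem a ha
        have h2 := hmem b hb
        have := Int.eq_zero_of_abs_lt_dvd hab (by rw [abs_lt]; push_cast; constructor <;> omega)
        omega)
    refine ⟨z, fun x hx hzx => ?_⟩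
    obtain ⟨a, ha, b, hb, c, hc, d, hd, h⟩ := hz x hzx
    have h1 := hmem a ha
    have h2 := hmem b hb
    have h3 := hmem c hc
    have h4 := hmem d hd
    rw [abs_le] at hx
    have := Int.eq_zero_of_abs_lt_dvd h (by rw [abs_lt]; push_cast; constructor <;> omega)
    exact ⟨a, h1.1, b, h2.1, c, h3.1, d, h4.1, by omega⟩
  choose z hz using fun n : ℕ => key (D + 1 + n) (by omega)
  obtain ⟨w, φ, hφ, hw⟩ := CompactSpace.tendsto_subseq z
  refine ⟨_, w, fun x hx => ?_⟩
  have hev : ∀ᶠ n in atTop, ∀ j, 0 < ((z (φ n) j ^ x : Circle) : ℂ).re := by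
    refine eventually_all.2 fun j => ?_
    have h1 : Tendsto (fun n => ((z (φ n) j ^ x : Circle) : ℂ).re) atTop
        (𝓝 ((w j ^ x : Circle) : ℂ).re) := by
      have h2 : Continuous fun u : Fin (2 * q ^ 2) → Circle => ((u j ^ x : Circle) : ℂ).re :=
        Complex.continuous_re.comp (continuous_subtype_val.comp ((continuous_apply j).zpow x))
      exact (h2.tendsto w).comp hw
    exact h1.eventually_const_lt (hx j)
  obtain ⟨n, hn, hxn⟩ := (hev.and (eventually_ge_atTop x.natAbs)).exists
  refine hz (φ n) x ?_ fun j => (hn j).le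
  have := hφ.id_le n
  rw [Int.abs_eq_natAbs]
  simp only [id] at this
  omega

lemma exists_finset_net {ι M : Type*} [Nonempty ι] [PseudoMetricSpace M] {V : ι → M}
    (htb : TotallyBounded (Set.range V)) {ε : ℝ} (hε : 0 < ε) :
    ∃ S : Finset ι, ∀ i, ∃ s ∈ S, dist (V i) (V s) < ε := by
  obtain ⟨t, ht, htf, hcov⟩ := Metric.finite_approx_of_totallyBounded htb ε hε
  choose! g hg using fun y (hy : y ∈ t) => ht hy
  refine ⟨(htf.image g).toFinset, fun i => ?_⟩
  obtain ⟨y, hy, hiy⟩ := Set.mem_iUnion₂.1 (hcov ⟨i, rfl⟩)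
  exact ⟨g y, (htf.image g).mem_toFinset.2 ⟨y, hy, rfl⟩, by rwa [hg y hy]⟩

/-- If an orbit of an isometric action of `ℝ` is totally bounded and continuous, the set of
`ε`-almost periods contains a Bohr neighbourhood of `0`. -/
lemma exists_bohr_nhd {M : Type*} [PseudoMetricSpace M] (V : ℝ → M)
    (hiso : ∀ s t u, dist (V (s + u)) (V (t + u)) = dist (V s) (V t))
    (htb : TotallyBounded (Set.range V)) (hcont : ContinuousAt V 0) {ε : ℝ} (hε : 0 < ε) :
    ∃ (Λ : Finset ℝ) (δ : ℝ), 0 < δ ∧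
      ∀ t : ℝ, (∀ l ∈ Λ, ‖Complex.exp (I * l * t) - 1‖ < δ) → dist (V t) (V 0) < ε := by
  classical
  set p : ℝ → ℝ := fun t => dist (V t) (V 0) with hp
  have hadd : ∀ s t, p (s + t) ≤ p s + p t := fun s t => by
    have h1 := dist_triangle (V (s + t)) (V t) (V 0)
    have h2 := hiso s 0 t
    rw [zero_add] at h2
    simp only [hp]
    linarith
  have hsub : ∀ s t, p (s - t) = dist (V s) (V t) := fun s t => by
    have h1 := hiso (s - t) 0 t
    rw [sub_add_cancel, zero_add] at h1
    exact h1.symm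
  have hneg : ∀ t, p (-t) = p t := fun t => by
    rw [← zero_sub, hsub, dist_comm]
  obtain ⟨r, hr, hrε⟩ := Metric.continuousAt_iff.1 hcont (ε / 2) (by positivity)
  set h : ℝ := r / 2 with hh
  have hh0 : 0 < h := by positivity
  set E : Set ℤ := {n | p (n * h) < ε / 8} with hE
  obtain ⟨S, hS⟩ : ∃ S : Finset ℤ, ∀ n : ℤ, ∃ s ∈ S, n - s ∈ E := by
    have htb' : TotallyBounded (Set.range fun n : ℤ => V (n * h)) :=
      htb.subset (by rintro _ ⟨n, rfl⟩; exact ⟨_, rfl⟩)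
    obtain ⟨S, hS⟩ := exists_finset_net htb' (ε := ε / 8) (by positivity)
    refine ⟨S, fun n => ?_⟩
    obtain ⟨s, hs, hns⟩ := hS n
    refine ⟨s, hs, ?_⟩
    rw [← hsub, ← sub_mul] at hns
    simpa [hE] using hns
  obtain ⟨m, z, hz⟩ := bogoliubov_int E S hS
  set θ : Fin m → ℝ := fun j => Complex.arg (z j) with hθ
  refine ⟨insert (2 * Real.pi / h) (Finset.univ.image fun j => θ j / h), 1 / 2, by norm_num,
    fun t ht => ?_⟩
  set n : ℤ := round (t / h) with hn
  set s : ℝ := t - n * h with hs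
  have hs1 : |s / h| ≤ 1 / 2 := by
    have h1 := abs_sub_round (t / h)
    have h2 : s / h = t / h - n := by rw [hs]; field_simp
    rwa [h2]
  have hs2 : |s / h| ≤ 1 / 8 := by
    have h1 := ht _ (Finset.mem_insert_self _ _)
    have h2 : Complex.exp (I * ((2 * Real.pi / h : ℝ) : ℂ) * t)
        = Complex.exp (I * ((2 * Real.pi * (s / h) : ℝ) : ℂ)) := by
      rw [Complex.exp_eq_exp_iff_exists_int]
      refine ⟨n, ?_⟩
      have hhC : (h : ℂ) ≠ 0 := by exact_mod_cast hh0.ne'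
      rw [hs]
      push_cast
      field_simp
      ring
    rw [h2, Complex.norm_exp_I_mul_ofReal_sub_one, Real.norm_eq_abs, abs_mul, abs_two] at h1
    have h3 : |2 * Real.pi * (s / h) / 2| ≤ Real.pi / 2 := by
      rw [show 2 * Real.pi * (s / h) / 2 = Real.pi * (s / h) by ring, abs_mul,
        abs_of_pos Real.pi_pos]
      nlinarith [Real.pi_pos]
    have h4 := Real.mul_abs_le_abs_sin h3
    rw [show 2 * Real.pi * (s / h) / 2 = Real.pi * (s / h) by ring, abs_mul,
        abs_of_pos Real.pi_pos, ← mul_assoc, div_mul_cancel₀ _ Real.pi_ne_zero] at h4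
    rw [show 2 * Real.pi * (s / h) / 2 = Real.pi * (s / h) by ring] at h1
    linarith
  have hpn : p (n * h) < ε / 2 := by
    obtain ⟨a, ha, b, hb, c, hc, d, hd, habcd⟩ := hz n fun j => by
      have h1 := ht (θ j / h) (Finset.mem_insert_of_mem (Finset.mem_image_of_mem _
        (Finset.mem_univ j)))
      have h2 : ((z j ^ n : Circle) : ℂ) = Complex.exp (I * ((θ j / h : ℝ) : ℂ) * t) *
          Complex.exp (I * ((-(θ j * (s / h)) : ℝ) : ℂ)) := by
        have hzj : (z j : ℂ) = Complex.exp (θ j * I) := by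
          have := Complex.norm_mul_exp_arg_mul_I (z j : ℂ)
          rw [Circle.norm_coe, Complex.ofReal_one, one_mul] at this
          exact this.symm
        have hhC : (h : ℂ) ≠ 0 := by exact_mod_cast hh0.ne'
        rw [Circle.coe_zpow, hzj, ← Complex.exp_int_mul, ← Complex.exp_add]
        congr 1
        rw [hs]
        push_cast
        field_simp
        ring
      set u := Complex.exp (I * ((θ j / h : ℝ) : ℂ) * t)
      set v := Complex.exp (I * ((-(θ j * (s / h)) : ℝ) : ℂ)) with hv
      have hv1 : ‖v - 1‖ ≤ 1 / 2 := by
        refine Real.norm_exp_I_mul_ofReal_sub_one_le.trans ?_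
        rw [Real.norm_eq_abs, abs_neg, abs_mul]
        have h3 : |θ j| ≤ Real.pi := Complex.abs_arg_le_pi _
        nlinarith [Real.pi_lt_four, abs_nonneg (θ j), abs_nonneg (s / h)]
      have hv2 : ‖v‖ = 1 := by rw [hv, mul_comm, Complex.norm_exp_ofReal_mul_I]
      have h4 : ‖u * v - 1‖ < 1 := by
        calc ‖u * v - 1‖ = ‖(u - 1) * v + (v - 1)‖ := by ring_nf
          _ ≤ ‖u - 1‖ * ‖v‖ + ‖v - 1‖ := (norm_add_le _ _).trans (by rw [norm_mul])
          _ < 1 := by rw [hv2]; linarith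
      rw [h2]
      have h5 := (abs_le.1 (Complex.abs_re_le_norm (u * v - 1))).1
      rw [Complex.sub_re, Complex.one_re] at h5
      linarith
    have hE' : ∀ x ∈ E, p (x * h) < ε / 8 := fun x hx => hx
    have h1 : (n : ℝ) * h = (a * h + b * h) + (-(c * h) + -(d * h)) := by
      rw [← habcd]; push_cast; ring
    have h2 := hadd (a * h + b * h) (-(c * h) + -(d * h))
    have h3 := hadd (a * h) (b * h)
    have h4 := hadd (-(c * h)) (-(d * h))
    rw [hneg, hneg] at h4
    rw [h1]
    linarith [hE' a ha, hE' b hb, hE' c hc, hE' d hd]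
  have hps : p s < ε / 2 := by
    refine hrε ?_
    rw [Real.dist_eq, sub_zero]
    rw [abs_div, abs_of_pos hh0, div_le_iff₀ hh0] at hs1
    linarith
  have : t = n * h + s := by rw [hs]; ring
  have h1 := hadd (n * h) s
  rw [← this] at h1
  change p t < ε
  linarith


/-! ### An invariant mean on bounded continuous functions -/

/-- The average of `g` over `[-R, R]`. -/
def symmAverage (g : ℝ →ᵇ ℂ) (R : ℝ) : ℂ := (2 * R)⁻¹ • ∫ x in (-R)..R, g x

lemma norm_symmAverage_le (g : ℝ →ᵇ ℂ) (R : ℝ) : ‖symmAverage g R‖ ≤ ‖g‖ := by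
  rw [symmAverage, norm_smul, norm_inv, Real.norm_eq_abs]
  have h1 : ‖∫ x in (-R)..R, g x‖ ≤ ‖g‖ * |R - -R| :=
    intervalIntegral.norm_integral_le_of_norm_le_const fun x _ => g.norm_coe_le_norm x
  rw [sub_neg_eq_add, ← two_mul] at h1
  calc |2 * R|⁻¹ * ‖∫ x in (-R)..R, g x‖ ≤ |2 * R|⁻¹ * (‖g‖ * |2 * R|) := by gcongr
    _ = ‖g‖ * (|2 * R|⁻¹ * |2 * R|) := by ring
    _ ≤ ‖g‖ * 1 := by gcongr; exact inv_mul_le_one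
    _ = ‖g‖ := mul_one _

lemma symmAverage_add (f g : ℝ →ᵇ ℂ) (R : ℝ) :
    symmAverage (f + g) R = symmAverage f R + symmAverage g R := by
  simp only [symmAverage, BoundedContinuousFunction.coe_add, Pi.add_apply]
  rw [intervalIntegral.integral_add (f.continuous.intervalIntegrable _ _)
    (g.continuous.intervalIntegrable _ _), smul_add]

lemma symmAverage_smul (c : ℂ) (g : ℝ →ᵇ ℂ) (R : ℝ) :
    symmAverage (c • g) R = c • symmAverage g R := by
  simp only [symmAverage, BoundedContinuousFunction.coe_smul]
  rw [intervalIntegral.integral_smul, smul_comm]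

/-- An ultrafilter of radii tending to infinity. -/
def radiusUltrafilter : Ultrafilter ℝ := Ultrafilter.of atTop

lemma radiusUltrafilter_le : (radiusUltrafilter : Filter ℝ) ≤ atTop := Ultrafilter.of_le _

lemma tendsto_symmAverage_limUnder (g : ℝ →ᵇ ℂ) :
    Tendsto (symmAverage g) radiusUltrafilter
      (𝓝 (limUnder (radiusUltrafilter : Filter ℝ) (symmAverage g))) := by
  refine tendsto_nhds_limUnder ?_
  obtain ⟨x, -, hx⟩ := isCompact_iff_ultrafilter_le_nhds.1 (isCompact_closedBall (0 : ℂ) ‖g‖)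
    (radiusUltrafilter.map (symmAverage g)) (by
      rw [le_principal_iff]
      exact Filter.mem_map.2 (Filter.univ_mem' fun R => by
        simpa using norm_symmAverage_le g R))
  exact ⟨x, hx⟩

/-- A Banach mean on `ℝ`: the limit of the symmetric averages along an ultrafilter. -/
def banachMean : (ℝ →ᵇ ℂ) →L[ℂ] ℂ :=
  LinearMap.mkContinuous
    { toFun := fun g => limUnder (radiusUltrafilter : Filter ℝ) (symmAverage g)
      map_add' := fun f g => by
        refine Tendsto.limUnder_eq ?_
        refine ((tendsto_symmAverage_limUnder f).add (tendsto_symmAverage_limUnder g)).congr ?_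
        exact fun R => (symmAverage_add f g R).symm
      map_smul' := fun c g => by
        refine Tendsto.limUnder_eq ?_
        exact ((tendsto_symmAverage_limUnder g).const_smul c).congr
          fun R => (symmAverage_smul c g R).symm }
    1 fun g => by
      rw [one_mul]
      exact le_of_tendsto (tendsto_symmAverage_limUnder g).norm
        (Filter.Eventually.of_forall fun R => norm_symmAverage_le g R)

lemma tendsto_banachMean (g : ℝ →ᵇ ℂ) :
    Tendsto (symmAverage g) radiusUltrafilter (𝓝 (banachMean g)) :=
  tendsto_symmAverage_limUnder g

lemma norm_banachMean_le (g : ℝ →ᵇ ℂ) : ‖banachMean g‖ ≤ ‖g‖ :=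
  le_of_tendsto (tendsto_banachMean g).norm
    (Filter.Eventually.of_forall fun R => norm_symmAverage_le g R)

lemma banachMean_eq_of_tendsto {g : ℝ →ᵇ ℂ} {a : ℂ}
    (h : Tendsto (symmAverage g) atTop (𝓝 a)) : banachMean g = a :=
  tendsto_nhds_unique (tendsto_banachMean g) (h.mono_left radiusUltrafilter_le)

/-- Functions whose integrals over `[-R, R]` stay within bounded distance have the same mean. -/
lemma banachMean_congr {f g : ℝ →ᵇ ℂ} {C : ℝ}
    (h : ∀ R > 0, ‖(∫ x in (-R)..R, f x) - ∫ x in (-R)..R, g x‖ ≤ C) :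
    banachMean f = banachMean g := by
  have h0 : Tendsto (fun R => symmAverage f R - symmAverage g R) atTop (𝓝 0) := by
    have h1 : Tendsto (fun R : ℝ => (2 * R)⁻¹ * C) atTop (𝓝 0) := by
      have := (tendsto_inv_atTop_zero.comp
        (tendsto_id.const_mul_atTop (zero_lt_two (α := ℝ)))).mul_const C
      simpa using this
    refine squeeze_zero_norm' ?_ h1
    filter_upwards [eventually_gt_atTop 0] with R hR
    rw [symmAverage, symmAverage, ← smul_sub, norm_smul, norm_inv, Real.norm_eq_abs,
      abs_of_pos (by positivity)]
    gcongr
    exact h R hR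
  have h1 := (tendsto_banachMean f).sub (tendsto_banachMean g)
  exact sub_eq_zero.1 (tendsto_nhds_unique h1 (h0.mono_left radiusUltrafilter_le))

lemma banachMean_shift {f g : ℝ →ᵇ ℂ} {s : ℝ} (h : ∀ t, f t = g (t + s)) :
    banachMean f = banachMean g := by
  refine banachMean_congr (C := ‖g‖ * |s| + ‖g‖ * |s|) fun R _ => ?_
  simp_rw [h]
  rw [intervalIntegral.integral_comp_add_right]
  have hi : ∀ a b, IntervalIntegrable g MeasureTheory.volume a b :=
    fun a b => g.continuous.intervalIntegrable a b
  have h1 : ∀ a, ‖∫ x in a..(a + s), g x‖ ≤ ‖g‖ * |s| := fun a => by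
    have := intervalIntegral.norm_integral_le_of_norm_le_const (a := a) (b := a + s)
      fun x _ => g.norm_coe_le_norm x
    simpa using this
  rw [intervalIntegral.integral_interval_sub_interval_comm (hi _ _) (hi _ _) (hi _ _),
    intervalIntegral.integral_symm]
  refine (norm_sub_le _ _).trans (add_le_add ?_ ?_)
  · rw [norm_neg]
    exact h1 (-R)
  · rw [intervalIntegral.integral_symm, norm_neg]
    exact h1 R

lemma norm_banachMean_le_re {f g : ℝ →ᵇ ℂ} (h : ∀ t, ‖f t‖ ≤ (g t).re) :
    ‖banachMean f‖ ≤ (banachMean g).re := by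
  refine le_of_tendsto_of_tendsto (tendsto_banachMean f).norm
    ((Complex.continuous_re.tendsto _).comp (tendsto_banachMean g)) ?_
  refine radiusUltrafilter_le (eventually_ge_atTop (0 : ℝ) |>.mono fun R hR => ?_)
  have hi : IntervalIntegrable g MeasureTheory.volume (-R) R := g.continuous.intervalIntegrable _ _
  have h1 : (∫ x in (-R)..R, g x).re = ∫ x in (-R)..R, (g x).re := by
    have := Complex.reCLM.intervalIntegral_comp_comm hi
    simpa using this.symm
  simp only [Function.comp, symmAverage]
  rw [norm_smul, norm_inv, Real.norm_eq_abs, abs_of_nonneg (by positivity), Complex.smul_re,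
    smul_eq_mul, h1]
  gcongr
  refine intervalIntegral.norm_integral_le_of_norm_le (by linarith) ?_ ?_
  · exact Filter.Eventually.of_forall fun t _ => h t
  · exact (Complex.continuous_re.comp g.continuous).intervalIntegrable _ _

lemma banachMean_const (c : ℂ) : banachMean (BoundedContinuousFunction.const ℝ c) = c := by
  refine banachMean_eq_of_tendsto (tendsto_const_nhds.congr' ?_)
  filter_upwards [eventually_gt_atTop 0] with R hR
  simp only [symmAverage, BoundedContinuousFunction.const_apply, intervalIntegral.integral_const,
    smul_smul, sub_neg_eq_add, ← two_mul]
  rw [inv_mul_cancel₀ (by positivity), one_smul]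

/-! ### Characters -/

/-- The character `t ↦ exp (i l t)` of `ℝ`. -/
def charR (l : ℝ) : ℝ →ᵇ ℂ :=
  BoundedContinuousFunction.ofNormedAddCommGroup (fun t : ℝ => Complex.exp (I * l * t))
    (by fun_prop) 1 fun t => by
      rw [show I * (l : ℂ) * t = ((l * t : ℝ) : ℂ) * I by push_cast; ring,
        Complex.norm_exp_ofReal_mul_I]

lemma charR_apply (l t : ℝ) : charR l t = Complex.exp (I * l * t) := rfl

lemma charR_mul (l m : ℝ) : charR l * charR m = charR (l + m) := by
  ext t
  simp only [BoundedContinuousFunction.coe_mul, Pi.mul_apply, charR_apply, ← Complex.exp_add]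
  push_cast
  ring_nf

lemma charR_zero : charR 0 = 1 := by
  ext t
  simp [charR_apply]

lemma tendsto_symmAverage_charR {l : ℝ} (hl : l ≠ 0) :
    Tendsto (symmAverage (charR l)) atTop (𝓝 0) := by
  have h1 : Tendsto (fun R : ℝ => (2 * R)⁻¹ * (2 / |l|)) atTop (𝓝 0) := by
    have := (tendsto_inv_atTop_zero.comp
      (tendsto_id.const_mul_atTop (zero_lt_two (α := ℝ)))).mul_const (2 / |l|)
    simpa using this
  refine squeeze_zero_norm' ?_ h1
  filter_upwards [eventually_gt_atTop 0] with R hR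
  have hIl : I * (l : ℂ) ≠ 0 := mul_ne_zero I_ne_zero (by exact_mod_cast hl)
  have hn : ∀ t : ℝ, ‖Complex.exp (I * l * t)‖ = 1 := fun t => by
    rw [show I * (l : ℂ) * t = ((l * t : ℝ) : ℂ) * I by push_cast; ring,
        Complex.norm_exp_ofReal_mul_I]
  simp only [symmAverage, charR_apply]
  rw [norm_smul, norm_inv, Real.norm_eq_abs, abs_of_pos (by positivity),
    integral_exp_mul_complex hIl, norm_div, norm_mul, norm_I, one_mul, Complex.norm_real,
    Real.norm_eq_abs]
  gcongr
  refine (norm_sub_le _ _).trans ?_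
  rw [hn, hn]
  norm_num

/-- The trigonometric polynomials. -/
def trigPoly : Submodule ℂ (ℝ →ᵇ ℂ) := Submodule.span ℂ (Set.range charR)

lemma trigPoly_eq_adjoin :
    trigPoly = Subalgebra.toSubmodule (Algebra.adjoin ℂ (Set.range charR)) := by
  rw [Algebra.adjoin_eq_span_of_subset]
  · rfl
  · refine Set.Subset.trans ?_ Submodule.subset_span
    intro x hx
    induction hx using Submonoid.closure_induction with
    | mem x hx => exact hx
    | one => exact ⟨0, charR_zero⟩
    | mul x y _ _ hx hy =>
      obtain ⟨l, rfl⟩ := hx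
      obtain ⟨m, rfl⟩ := hy
      exact ⟨l + m, (charR_mul l m).symm⟩

lemma tendsto_symmAverage_of_mem_closure {g : ℝ →ᵇ ℂ} (hg : g ∈ trigPoly.topologicalClosure) :
    Tendsto (symmAverage g) atTop (𝓝 (banachMean g)) := by
  have hpoly : ∀ p ∈ trigPoly, Tendsto (symmAverage p) atTop (𝓝 (banachMean p)) := by
    intro p hp
    suffices h : ∃ a, Tendsto (symmAverage p) atTop (𝓝 a) by
      obtain ⟨a, ha⟩ := h
      rwa [banachMean_eq_of_tendsto ha]
    induction hp using Submodule.span_induction with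
    | mem x hx =>
      obtain ⟨l, rfl⟩ := hx
      rcases eq_or_ne l 0 with rfl | hl
      · refine ⟨1, tendsto_const_nhds.congr' ?_⟩
        filter_upwards [eventually_gt_atTop 0] with R hR
        simp only [symmAverage, charR_zero, BoundedContinuousFunction.coe_one, Pi.one_apply,
          intervalIntegral.integral_const, smul_smul, sub_neg_eq_add, ← two_mul]
        rw [inv_mul_cancel₀ (by positivity), one_smul]
      · exact ⟨0, tendsto_symmAverage_charR hl⟩
    | zero => exact ⟨0, tendsto_const_nhds.congr fun R => by simp [symmAverage]⟩
    | add x y _ _ hx hy =>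
      obtain ⟨a, ha⟩ := hx
      obtain ⟨b, hb⟩ := hy
      exact ⟨a + b, (ha.add hb).congr fun R => (symmAverage_add x y R).symm⟩
    | smul c x _ hx =>
      obtain ⟨a, ha⟩ := hx
      exact ⟨c • a, (ha.const_smul c).congr fun R => (symmAverage_smul c x R).symm⟩
  rw [Metric.tendsto_nhds]
  intro ε hε
  obtain ⟨p, hp, hgp⟩ := Metric.mem_closure_iff.1 hg (ε / 3) (by positivity)
  filter_upwards [Metric.tendsto_nhds.1 (hpoly p hp) (ε / 3) (by positivity)] with R hR
  have h1 : symmAverage g R = symmAverage (g - p) R + symmAverage p R := by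
    rw [← symmAverage_add, sub_add_cancel]
  have h2 : banachMean g = banachMean (g - p) + banachMean p := by
    rw [← map_add, sub_add_cancel]
  have h3 := norm_symmAverage_le (g - p) R
  have h4 := norm_banachMean_le (g - p)
  rw [dist_eq_norm] at hgp hR ⊢
  rw [h1, h2]
  calc _ = ‖symmAverage (g - p) R - banachMean (g - p) + (symmAverage p R - banachMean p)‖ := by
        congr 1; ring
    _ ≤ ‖symmAverage (g - p) R‖ + ‖banachMean (g - p)‖ + ‖symmAverage p R - banachMean p‖ :=
        (norm_add_le _ _).trans (by gcongr; exact norm_sub_le _ _)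
    _ < ε := by linarith


/-- Nonnegative trigonometric polynomials of mean one concentrated on a Bohr neighbourhood. -/
lemma exists_trigPoly_kernel (Λ : Finset ℝ) {δ η : ℝ} (hδ : 0 < δ) (hη : 0 < η) :
    ∃ k ∈ trigPoly, (∀ t, ‖k t‖ ≤ (k t).re) ∧ banachMean k = 1 ∧
      ∀ t : ℝ, (∃ l ∈ Λ, δ ≤ ‖Complex.exp (I * l * t) - 1‖) → ‖k t‖ ≤ η := by
  classical
  wlog hδ1 : δ ≤ 1 generalizing δ
  · obtain ⟨k, hk, h1, h2, h3⟩ := this one_pos le_rfl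
    exact ⟨k, hk, h1, h2, fun t ⟨l, hl, hlt⟩ => h3 t ⟨l, hl, (not_le.1 hδ1).le.trans hlt⟩⟩
  set m : ℝ := (Λ.card : ℝ) with hm
  have hm0 : 0 ≤ m := Nat.cast_nonneg _
  set c : ℝ := 1 / (4 * (m + 1)) with hc
  have hc0 : 0 < c := by positivity
  have hcm : c * (4 * (m + 1)) = 1 := by rw [hc]; field_simp
  set W : ℝ → ℝ := fun t => ∑ l ∈ Λ, ‖Complex.exp (I * l * t) - 1‖ ^ 2 with hW
  set Q : ℝ →ᵇ ℂ := 1 - (c : ℂ) • ∑ l ∈ Λ, ((1 + 1) - charR l - charR (-l)) with hQ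
  have hexp : ∀ l t : ℝ, ‖Complex.exp (I * l * t)‖ = 1 := fun l t => by
    rw [show I * (l : ℂ) * t = ((l * t : ℝ) : ℂ) * I by push_cast; ring,
        Complex.norm_exp_ofReal_mul_I]
  have hQt : ∀ t, Q t = ((1 - c * W t : ℝ) : ℂ) := by
    intro t
    have h1 : ∀ l : ℝ, ((‖Complex.exp (I * l * t) - 1‖ ^ 2 : ℝ) : ℂ)
        = (1 + 1) - charR l t - charR (-l) t := by
      intro l
      have h2 : (starRingEnd ℂ) (Complex.exp (I * l * t)) = charR (-l) t := by
        rw [← Complex.exp_conj, charR_apply]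
        congr 1
        simp
      have h3 : charR l t * charR (-l) t = 1 := by
        have := congrArg (fun f : ℝ →ᵇ ℂ => f t) (charR_mul l (-l))
        simpa [charR_zero] using this
      rw [Complex.ofReal_pow, ← Complex.mul_conj', map_sub, h2, map_one, ← charR_apply]
      linear_combination h3
    rw [hQ, hW]
    push_cast
    simp only [BoundedContinuousFunction.coe_sub, BoundedContinuousFunction.coe_smul,
      BoundedContinuousFunction.coe_sum, Pi.sub_apply, BoundedContinuousFunction.coe_one,
      Pi.one_apply, Finset.sum_apply, BoundedContinuousFunction.coe_add, Pi.add_apply, smul_eq_mul]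
    congr 2
    refine Finset.sum_congr rfl fun l _ => ?_
    rw [← h1]
    push_cast
    rfl
  have hW0 : ∀ t, 0 ≤ W t := fun t => Finset.sum_nonneg fun l _ => by positivity
  have hW4 : ∀ t, W t ≤ 4 * m := by
    intro t
    have : W t ≤ ∑ l ∈ Λ, (4 : ℝ) := by
      refine Finset.sum_le_sum fun l _ => ?_
      have h1 : ‖Complex.exp (I * l * t) - 1‖ ≤ 2 := by
        refine (norm_sub_le _ _).trans ?_
        rw [hexp, norm_one]; norm_num
      nlinarith [norm_nonneg (Complex.exp (I * l * t) - 1)]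
    rw [Finset.sum_const, nsmul_eq_mul] at this
    linarith
  have hq0 : ∀ t, 0 ≤ 1 - c * W t := fun t => by nlinarith [hW4 t]
  have hQmem : ∀ n : ℕ, Q ^ n ∈ trigPoly := by
    intro n
    rw [trigPoly_eq_adjoin]
    have hch : ∀ l, charR l ∈ Algebra.adjoin ℂ (Set.range charR) :=
      fun l => Algebra.subset_adjoin ⟨l, rfl⟩
    refine pow_mem (sub_mem (one_mem _) (Subalgebra.smul_mem _ (sum_mem fun l _ => ?_) _)) n
    exact sub_mem (sub_mem (add_mem (one_mem _) (one_mem _)) (hch l)) (hch (-l))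
  obtain ⟨S, hS⟩ : ∃ S : Finset ℝ, ∀ t, ∃ s ∈ S, W (t - s) ≤ δ ^ 2 / 4 := by
    set V : ℝ → (Λ → ℂ) := fun t l => Complex.exp (I * (l : ℝ) * t) with hV
    have htb : TotallyBounded (Set.range V) := by
      refine (isCompact_closedBall (0 : Λ → ℂ) 1).totallyBounded.subset ?_
      rintro _ ⟨t, rfl⟩
      rw [mem_closedBall_zero_iff, pi_norm_le_iff_of_nonneg zero_le_one]
      exact fun l => (hexp l t).le
    obtain ⟨S, hS⟩ := exists_finset_net htb (ε := δ / (2 * (m + 1))) (by positivity)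
    refine ⟨S, fun t => ?_⟩
    obtain ⟨s, hs, hts⟩ := hS t
    refine ⟨s, hs, ?_⟩
    have h1 : W (t - s) ≤ ∑ l ∈ Λ, (δ / (2 * (m + 1))) ^ 2 := by
      refine Finset.sum_le_sum fun l hl => ?_
      have h2 : dist (V t ⟨l, hl⟩) (V s ⟨l, hl⟩) < δ / (2 * (m + 1)) :=
        (dist_le_pi_dist (V t) (V s) ⟨l, hl⟩).trans_lt hts
      have h3 : ‖Complex.exp (I * l * ((t - s : ℝ) : ℂ)) - 1‖
          = dist (V t ⟨l, hl⟩) (V s ⟨l, hl⟩) := by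
        rw [dist_eq_norm, ← mul_one ‖Complex.exp (I * l * ((t - s : ℝ) : ℂ)) - 1‖, ← hexp l s,
          ← norm_mul, sub_mul, ← Complex.exp_add, one_mul]
        congr 3
        push_cast
        ring_nf
      rw [h3]
      gcongr
    refine h1.trans ?_
    rw [Finset.sum_const, nsmul_eq_mul, ← hm, div_pow, mul_pow, mul_div_assoc',
      div_le_div_iff₀ (by positivity) (by positivity)]
    nlinarith [sq_nonneg δ, mul_nonneg (sq_nonneg δ) (mul_nonneg hm0 hm0),
      mul_nonneg (sq_nonneg δ) hm0]
  set ρ₁ : ℝ := 1 - c * δ ^ 2 with hρ₁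
  set ρ₂ : ℝ := 1 - c * (δ ^ 2 / 4) with hρ₂
  have hδ2 : 0 < δ ^ 2 := by positivity
  have hδ3 : δ ^ 2 ≤ 1 := pow_le_one₀ hδ.le hδ1
  have hc4 : c ≤ 1 / 4 := by nlinarith
  have hρ₁0 : 0 ≤ ρ₁ := by rw [hρ₁]; nlinarith
  have hρ : ρ₁ < ρ₂ := by rw [hρ₁, hρ₂]; nlinarith
  have hρ₂0 : 0 < ρ₂ := hρ₁0.trans_lt hρ
  have hlim : Tendsto (fun n : ℕ => (S.card : ℝ) * (ρ₁ / ρ₂) ^ n) atTop (𝓝 0) := by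
    have := (tendsto_pow_atTop_nhds_zero_of_lt_one (div_nonneg hρ₁0 hρ₂0.le)
      ((div_lt_one hρ₂0).2 hρ)).const_mul (S.card : ℝ)
    simpa using this
  obtain ⟨n, hn⟩ := (hlim.eventually_lt_const hη).exists
  set P : ℝ →ᵇ ℂ := Q ^ n with hP
  have hPt : ∀ t, P t = (((1 - c * W t) ^ n : ℝ) : ℂ) := fun t => by
    rw [hP, BoundedContinuousFunction.coe_pow, Pi.pow_apply, hQt]
    push_cast
    rfl
  have hPn : ∀ t, ‖P t‖ = (1 - c * W t) ^ n := fun t => by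
    rw [hPt, Complex.norm_real, Real.norm_of_nonneg (pow_nonneg (hq0 t) n)]
  have hPre : ∀ t, (P t).re = (1 - c * W t) ^ n := fun t => by
    rw [hPt, Complex.ofReal_re]
  set r : ℝ := (banachMean P).re with hr
  have hPr : banachMean P = r := by
    have h1 : ‖banachMean P‖ ≤ (banachMean P).re :=
      norm_banachMean_le_re fun t => (by rw [hPn, hPre])
    have h2 := Complex.sq_norm_sub_sq_re (banachMean P)
    have h4 : (banachMean P).im = 0 := by
      have h5 : ‖banachMean P‖ = (banachMean P).re := le_antisymm h1 (Complex.re_le_norm _)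
      rw [h5, sub_self] at h2
      exact pow_eq_zero_iff two_ne_zero |>.1 h2.symm
    exact Complex.ext (by simp [hr]) (by simp [h4])
  have hlow : ρ₂ ^ n ≤ S.card * r := by
    set τ : ℝ → (ℝ →ᵇ ℂ) := fun s => P.compContinuous ⟨fun t => t - s, by fun_prop⟩ with hτ
    have h1 : banachMean (∑ s ∈ S, τ s) = S.card * (r : ℂ) := by
      rw [map_sum, Finset.sum_congr rfl fun s _ => (banachMean_shift (s := -s) fun t => by
        simp [hτ, sub_eq_add_neg] : banachMean (τ s) = banachMean P), Finset.sum_const,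
        nsmul_eq_mul, hPr]
    have h2 := norm_banachMean_le_re (f := BoundedContinuousFunction.const ℝ ((ρ₂ ^ n : ℝ) : ℂ))
      (g := ∑ s ∈ S, τ s) fun t => by
        obtain ⟨s, hs, hts⟩ := hS t
        rw [BoundedContinuousFunction.const_apply, Complex.norm_real,
          Real.norm_of_nonneg (by positivity), BoundedContinuousFunction.coe_sum,
          Finset.sum_apply, Complex.re_sum]
        have h3 : ρ₂ ^ n ≤ (τ s t).re := by
          change _ ≤ (P (t - s)).re
          rw [hPre]
          exact pow_le_pow_left₀ hρ₂0.le
            (sub_le_sub_left (mul_le_mul_of_nonneg_left hts hc0.le) 1) n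
        refine h3.trans (Finset.single_le_sum (f := fun s => (τ s t).re) (fun u _ => ?_) hs)
        change 0 ≤ (P (t - u)).re
        rw [hPre]
        exact pow_nonneg (hq0 _) n
    rw [banachMean_const, h1, Complex.norm_real, Real.norm_of_nonneg (by positivity)] at h2
    simpa using h2
  have hr0 : 0 < r := by
    by_contra! h
    have : (S.card : ℝ) * r ≤ 0 := mul_nonpos_of_nonneg_of_nonpos (Nat.cast_nonneg _) h
    have : 0 < ρ₂ ^ n := by positivity
    linarith
  have hkt : ∀ t, (((r⁻¹ : ℝ) : ℂ) • P) t = ((r⁻¹ * (1 - c * W t) ^ n : ℝ) : ℂ) := fun t => by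
    rw [BoundedContinuousFunction.smul_apply, hPt, smul_eq_mul, ← Complex.ofReal_mul]
  have hkn : ∀ t, ‖(((r⁻¹ : ℝ) : ℂ) • P) t‖ = r⁻¹ * (1 - c * W t) ^ n := fun t => by
    rw [hkt, Complex.norm_real, Real.norm_of_nonneg]
    have := pow_nonneg (hq0 t) n
    positivity
  refine ⟨((r⁻¹ : ℝ) : ℂ) • P, trigPoly.smul_mem _ (hQmem n), fun t => ?_, ?_, ?_⟩
  · rw [hkn, hkt, Complex.ofReal_re]
  · rw [map_smul, hPr, smul_eq_mul, ← Complex.ofReal_mul, inv_mul_cancel₀ hr0.ne',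
      Complex.ofReal_one]
  · rintro t ⟨l, hl, hlt⟩
    have h1 : δ ^ 2 ≤ W t := by
      refine le_trans (by gcongr) (Finset.single_le_sum
        (f := fun l : ℝ => ‖Complex.exp (I * l * t) - 1‖ ^ 2) (fun _ _ => by positivity) hl)
    have h2 : (1 - c * W t) ^ n ≤ ρ₁ ^ n :=
      pow_le_pow_left₀ (hq0 t) (sub_le_sub_left (mul_le_mul_of_nonneg_left h1 hc0.le) 1) n
    rw [hkn]
    refine le_trans ?_ hn.le
    rw [div_pow, inv_mul_le_iff₀ hr0, mul_div_assoc', mul_div_assoc', le_div_iff₀ (by positivity)]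
    calc (1 - c * W t) ^ n * ρ₂ ^ n ≤ ρ₁ ^ n * (S.card * r) := by gcongr
      _ = r * (S.card * ρ₁ ^ n) := by ring


/-! ### Functions on the strip -/

lemma isOpen_stripO : IsOpen stripO := isOpen_Ioo.preimage Complex.continuous_im

lemma stripO_subset : stripO ⊆ stripSet := fun _ hz => Set.Ioo_subset_Icc_self hz

lemma stripExt_apply (f : stripSet →ᵇ ℂ) (z : stripSet) : stripExt f z = f z := by
  rw [stripExt, dif_pos z.2]

lemma stripExt_of_mem (f : stripSet →ᵇ ℂ) {z : ℂ} (hz : z ∈ stripSet) :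
    stripExt f z = f ⟨z, hz⟩ := dif_pos hz

lemma stripShift_coe (x : ℝ) (z : stripSet) : ((stripShift x z : stripSet) : ℂ) = z + x := rfl

lemma translateS_apply (f : stripSet →ᵇ ℂ) (x : ℝ) (z : stripSet) :
    translateS f x z = f (stripShift x z) := rfl

lemma translateS_add (f g : stripSet →ᵇ ℂ) (x : ℝ) :
    translateS (f + g) x = translateS f x + translateS g x := rfl

lemma translateS_smul (c : ℂ) (f : stripSet →ᵇ ℂ) (x : ℝ) :
    translateS (c • f) x = c • translateS f x := rfl

lemma translateS_translateS (f : stripSet →ᵇ ℂ) (x y : ℝ) :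
    translateS (translateS f x) y = translateS f (x + y) := by
  ext z
  simp only [translateS_apply]
  congr 1
  refine Subtype.ext ?_
  simp only [stripShift_coe]
  push_cast
  ring

lemma translateS_zero (f : stripSet →ᵇ ℂ) : translateS f 0 = f := by
  ext z
  simp only [translateS_apply]
  congr 1
  exact Subtype.ext (by simp [stripShift_coe])

lemma norm_translateS (f : stripSet →ᵇ ℂ) (x : ℝ) : ‖translateS f x‖ = ‖f‖ := by
  refine le_antisymm (f.norm_compContinuous_le _) ?_
  have h := (translateS f x).norm_compContinuous_le (stripShift (-x))
  have h1 : (translateS f x).compContinuous (stripShift (-x)) = f := by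
    have := translateS_translateS f x (-x)
    rwa [add_neg_cancel, translateS_zero] at this
  rwa [h1] at h

lemma dist_translateS (f g : stripSet →ᵇ ℂ) (x : ℝ) :
    dist (translateS f x) (translateS g x) = dist f g := by
  rw [dist_eq_norm, dist_eq_norm, ← norm_translateS (f - g) x]
  rfl

/-- The set of `ε`-almost periods of `f` contains a Bohr neighbourhood of `0`. -/
def IsBohrAP (f : stripSet →ᵇ ℂ) : Prop :=
  ∀ ε > 0, ∃ (Λ : Finset ℝ) (δ : ℝ), 0 < δ ∧
    ∀ t : ℝ, (∀ l ∈ Λ, ‖Complex.exp (I * l * t) - 1‖ < δ) → dist (translateS f t) f < ε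

lemma isBohrAP_of_isCompact {f : stripSet →ᵇ ℂ}
    (hf : IsCompact (closure (Set.range (translateS f)))) :
    IsBohrAP f := by
  intro ε hε
  have hcont : ContinuousAt (translateS f) 0 := by
    rw [ContinuousAt, translateS_zero]
    refine hf.le_nhds_of_unique_clusterPt (l := map (translateS f) (𝓝 0)) ?_ fun g _ hg => ?_
    · exact Filter.mem_map.2 (Filter.univ_mem' fun t => subset_closure ⟨t, rfl⟩)
    · ext z
      have h1 : ClusterPt (g z) (map (fun t => translateS f t z) (𝓝 0)) := by
        have h2 : Continuous fun h : stripSet →ᵇ ℂ => h z :=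
          continuous_eval_const z
        exact hg.map h2.continuousAt (tendsto_map (f := fun h : stripSet →ᵇ ℂ => h z))
      have h3 : Tendsto (fun t => translateS f t z) (𝓝 0) (𝓝 (f z)) := by
        have h4 : Continuous fun t : ℝ => translateS f t z := by
          refine f.continuous.comp (Continuous.subtype_mk ?_ _)
          fun_prop
        have := h4.tendsto 0
        rwa [translateS_zero] at this
      exact eq_of_nhds_neBot ((h1.mono h3).neBot)
  obtain ⟨Λ, δ, hδ, h⟩ := exists_bohr_nhd (translateS f)
    (fun s t u => by rw [← translateS_translateS, ← translateS_translateS, dist_translateS])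
    (hf.totallyBounded.subset subset_closure) hcont hε
  rw [translateS_zero] at h
  exact ⟨Λ, δ, hδ, h⟩

/-- Holomorphic functions on the strip with Bohr neighbourhoods of almost periods. -/
def bohrHol : Submodule ℂ (stripSet →ᵇ ℂ) where
  carrier := {f | DifferentiableOn ℂ (stripExt f) stripO ∧ IsBohrAP f}
  zero_mem' := by
    refine ⟨(differentiableOn_const 0).congr fun z hz => ?_, fun ε hε => ⟨∅, 1, one_pos, ?_⟩⟩
    · rw [stripExt_of_mem _ (stripO_subset hz)]
      rfl
    · intro t _
      rw [show translateS (0 : stripSet →ᵇ ℂ) t = 0 from rfl, dist_self]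
      exact hε
  add_mem' := by
    classical
    rintro f g ⟨hf, hf'⟩ ⟨hg, hg'⟩
    refine ⟨(hf.add hg).congr fun z hz => ?_, fun ε hε => ?_⟩
    · rw [Pi.add_apply]
      simp only [stripExt_of_mem _ (stripO_subset hz)]
      rfl
    · obtain ⟨Λ, δ, hδ, h⟩ := hf' (ε / 2) (by positivity)
      obtain ⟨Λ', δ', hδ', h'⟩ := hg' (ε / 2) (by positivity)
      refine ⟨Λ ∪ Λ', min δ δ', lt_min hδ hδ', fun t ht => ?_⟩
      have h1 := h t fun l hl => (ht l (Finset.mem_union_left _ hl)).trans_le (min_le_left _ _)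
      have h2 := h' t fun l hl => (ht l (Finset.mem_union_right _ hl)).trans_le (min_le_right _ _)
      rw [translateS_add]
      have := dist_add_add_le (translateS f t) (translateS g t) f g
      linarith
  smul_mem' := by
    rintro c f ⟨hf, hf'⟩
    refine ⟨(hf.const_smul c).congr fun z hz => ?_, fun ε hε => ?_⟩
    · rw [Pi.smul_apply]
      simp only [stripExt_of_mem _ (stripO_subset hz)]
      rfl
    · obtain ⟨Λ, δ, hδ, h⟩ := hf' (ε / (‖c‖ + 1)) (by positivity)
      refine ⟨Λ, δ, hδ, fun t ht => ?_⟩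
      have h1 := h t ht
      rw [lt_div_iff₀ (by positivity)] at h1
      rw [translateS_smul, dist_smul₀]
      nlinarith [dist_nonneg (x := translateS f t) (y := f)]

lemma isClosed_bohrHol : IsClosed (bohrHol : Set (stripSet →ᵇ ℂ)) := by
  refine isClosed_of_closure_subset fun f hf => ?_
  refine ⟨?_, fun ε hε => ?_⟩
  · obtain ⟨u, hu, huf⟩ := mem_closure_iff_seq_limit.1 hf
    refine TendstoLocallyUniformlyOn.differentiableOn (φ := atTop)
      (F := fun n => stripExt (u n)) ?_ (Filter.Eventually.of_forall fun n => (hu n).1)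
      isOpen_stripO
    refine TendstoUniformlyOn.tendstoLocallyUniformlyOn ?_
    rw [BoundedContinuousFunction.tendsto_iff_tendstoUniformly, Metric.tendstoUniformly_iff] at huf
    rw [Metric.tendstoUniformlyOn_iff]
    intro ε hε
    filter_upwards [huf ε hε] with n hn z hz
    simp only [stripExt_of_mem _ (stripO_subset hz)]
    exact hn _
  · obtain ⟨g, hg, hfg⟩ := Metric.mem_closure_iff.1 hf (ε / 3) (by positivity)
    obtain ⟨Λ, δ, hδ, h⟩ := hg.2 (ε / 3) (by positivity)
    refine ⟨Λ, δ, hδ, fun t ht => ?_⟩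
    have h1 := h t ht
    have h2 := dist_triangle4 (translateS f t) (translateS g t) g f
    rw [dist_translateS, dist_comm g f] at h2
    linarith

lemma closure_span_le_bohrHol (Γ : Set ℝ) :
    (Submodule.span ℂ (APHset Γ)).topologicalClosure ≤ bohrHol := by
  refine Submodule.topologicalClosure_minimal _ (Submodule.span_le.2 fun f hf => ?_)
    isClosed_bohrHol
  exact ⟨hf.1.1, isBohrAP_of_isCompact hf.1.2⟩

/-- The horizontal line through `z`. -/
def lineMap (z : stripSet) : C(ℝ, stripSet) :=
  ⟨fun t => stripShift t z, Continuous.subtype_mk (by fun_prop) _⟩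

/-- Restriction of a function on the strip to the horizontal line through `z`. -/
def restrictLine (z : stripSet) : (stripSet →ᵇ ℂ) →L[ℂ] (ℝ →ᵇ ℂ) :=
  BoundedContinuousFunction.compContinuousCLM ℂ ℂ (lineMap z)

lemma restrictLine_apply (z : stripSet) (f : stripSet →ᵇ ℂ) (t : ℝ) :
    restrictLine z f t = f (stripShift t z) := rfl

lemma norm_restrictLine_apply_le (z : stripSet) (f : stripSet →ᵇ ℂ) (t : ℝ) :
    ‖restrictLine z f t‖ ≤ ‖f‖ := f.norm_coe_le_norm _

/-- The mean of a holomorphic function does not depend on the horizontal line. -/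
lemma banachMean_restrictLine {f : stripSet →ᵇ ℂ} (hf : DifferentiableOn ℂ (stripExt f) stripO)
    (z : stripSet) : banachMean (restrictLine z f) = banachMean (restrictLine (realPt 0) f) := by
  have him : ((⟨(z : ℂ).im * I, by simpa [stripSet] using z.2⟩ : stripSet) : ℂ) = (z : ℂ).im * I :=
    rfl
  set w : stripSet := ⟨(z : ℂ).im * I, by simpa [stripSet] using z.2⟩
  set y : ℝ := (z : ℂ).im with hy
  have hy0 : 0 ≤ y := z.2.1
  have hyπ : y ≤ Real.pi := z.2.2
  have h1 : banachMean (restrictLine z f) = banachMean (restrictLine w f) := by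
    refine banachMean_shift (s := (z : ℂ).re) fun t => ?_
    simp only [restrictLine_apply]
    congr 1
    refine Subtype.ext ?_
    simp only [stripShift_coe, him]
    apply Complex.ext <;> simp [hy, add_comm]
  rw [h1]
  refine banachMean_congr (C := ‖f‖ * y + ‖f‖ * y) fun R hR => ?_
  have hbound : ∀ u : ℂ, ‖stripExt f u‖ ≤ ‖f‖ := fun u => by
    by_cases hu : u ∈ stripSet
    · rw [stripExt_of_mem _ hu]; exact f.norm_coe_le_norm _
    · rw [stripExt, dif_neg hu, norm_zero]; exact norm_nonneg _
  have hcont : ContinuousOn (stripExt f) stripSet := by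
    rw [continuousOn_iff_continuous_domRestrict]
    refine f.continuous.congr fun u => ?_
    rw [Set.domRestrict_apply, stripExt_apply]
  have hrect := Complex.integral_boundary_rect_eq_zero_of_continuousOn_of_differentiableOn
    (stripExt f) (((-R : ℝ) : ℂ)) ((R : ℂ) + y * I)
    (hcont.mono fun u hu => by
      have h2 := hu.2
      simp only [Set.mem_preimage, Complex.ofReal_im, Complex.add_im, Complex.mul_im,
        Complex.ofReal_re, Complex.I_im, Complex.I_re, mul_one, mul_zero, add_zero, zero_add,
        Set.uIcc_of_le hy0] at h2
      exact ⟨h2.1, h2.2.trans hyπ⟩)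
    (hf.mono fun u hu => by
      have h2 := hu.2
      simp only [Set.mem_preimage, Complex.ofReal_im, Complex.add_im, Complex.mul_im,
        Complex.ofReal_re, Complex.I_im, Complex.I_re, mul_one, mul_zero, add_zero, zero_add,
        min_eq_left hy0, max_eq_right hy0] at h2
      exact ⟨h2.1, h2.2.trans_le hyπ⟩)
  simp only [Complex.ofReal_im, Complex.add_im, Complex.mul_im, Complex.ofReal_re, Complex.I_im,
    Complex.I_re, mul_one, mul_zero, add_zero, zero_add, Complex.add_re, Complex.mul_re, sub_zero,
    Complex.ofReal_zero, zero_mul] at hrect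
  have hw : ∀ t : ℝ, restrictLine w f t = stripExt f (t + y * I) := fun t => by
    rw [restrictLine_apply, ← stripExt_apply, stripShift_coe, him, add_comm]
  have h0 : ∀ t : ℝ, restrictLine (realPt 0) f t = stripExt f t := fun t => by
    rw [restrictLine_apply, ← stripExt_apply, stripShift_coe, realPt]
    simp
  simp_rw [hw, h0]
  have hside : ∀ x : ℂ, ‖I • ∫ v in (0 : ℝ)..y, stripExt f (x + v * I)‖ ≤ ‖f‖ * y := fun x => by
    rw [norm_smul, norm_I, one_mul]
    have := intervalIntegral.norm_integral_le_of_norm_le_const (a := 0) (b := y)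
      (f := fun v : ℝ => stripExt f (x + v * I)) fun v _ => hbound _
    rwa [sub_zero, abs_of_nonneg hy0] at this
  have hkey : (∫ x in (-R)..R, stripExt f (x + y * I)) - ∫ x in (-R)..R, stripExt f x
      = (I • ∫ v in (0 : ℝ)..y, stripExt f (R + v * I))
        - I • ∫ v in (0 : ℝ)..y, stripExt f (((-R : ℝ) : ℂ) + v * I) := by
    linear_combination -hrect
  rw [hkey]
  exact (norm_sub_le _ _).trans (add_le_add (hside _) (hside _))


/-- The exponential `z ↦ exp (i l z)` on the strip. -/
def charS (l : ℝ) : stripSet →ᵇ ℂ :=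
  BoundedContinuousFunction.ofNormedAddCommGroup (fun z : stripSet => Complex.exp (I * l * z))
    (by fun_prop) (Real.exp (|l| * Real.pi)) fun z => by
      rw [Complex.norm_exp, Real.exp_le_exp]
      have h1 : (I * (l : ℂ) * z).re = -(l * (z : ℂ).im) := by simp
      have h2 := z.2.1
      have h3 := z.2.2
      rw [h1]
      nlinarith [neg_abs_le l, abs_nonneg l]

lemma charS_apply (l : ℝ) (z : stripSet) : charS l z = Complex.exp (I * l * z) := rfl

lemma differentiableOn_charS (l : ℝ) : DifferentiableOn ℂ (stripExt (charS l)) stripO := by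
  have h1 : Differentiable ℂ fun z : ℂ => Complex.exp (I * l * z) := by fun_prop
  refine h1.differentiableOn.congr fun z hz => ?_
  rw [stripExt_of_mem _ (stripO_subset hz), charS_apply]

lemma charS_stripShift (l t : ℝ) (z : stripSet) :
    charS l (stripShift t z) = charR l t * charS l z := by
  simp only [charS_apply, charR_apply, stripShift_coe, ← Complex.exp_add]
  ring_nf

/-- The twisted restriction of `f` to the real line, whose mean is the Bohr–Fourier coefficient. -/
def twist (l : ℝ) : (stripSet →ᵇ ℂ) →L[ℂ] (ℝ →ᵇ ℂ) :=
  (ContinuousLinearMap.mul ℂ (ℝ →ᵇ ℂ) (charR (-l))).comp (restrictLine (realPt 0))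

lemma twist_eq (l : ℝ) (f : stripSet →ᵇ ℂ) :
    twist l f = charR (-l) * restrictLine (realPt 0) f := rfl

lemma twist_charS (l m : ℝ) : twist l (charS m) = charR (m - l) := by
  rw [twist_eq, sub_eq_neg_add, ← charR_mul]
  congr 1
  ext t
  rw [restrictLine_apply, charS_stripShift, charS_apply]
  simp [realPt]

lemma bohrCoeffR_eq_of_tendsto {f : stripSet →ᵇ ℂ} {l : ℝ} {a : ℂ}
    (h : Tendsto (symmAverage (twist l f)) atTop (𝓝 a)) :
    bohrCoeffR (fun x : ℝ => f (realPt x)) l = a := by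
  refine Tendsto.limUnder_eq (h.congr fun R => ?_)
  have h1 : ∀ x : ℝ, twist l f x = Complex.exp (-(I * l * x)) • f (realPt x) := fun x => by
    rw [twist_eq, BoundedContinuousFunction.coe_mul, Pi.mul_apply, charR_apply, restrictLine_apply,
      smul_eq_mul]
    congr 2
    · push_cast; ring
    · exact Subtype.ext (by simp [stripShift_coe, realPt])
  simp_rw [symmAverage, h1]

lemma charS_mem_APHset {Γ : Set ℝ} {l : ℝ} (hl : l ∈ Γ) : charS l ∈ APHset Γ := by
  refine ⟨⟨differentiableOn_charS l, ?_⟩, fun m hm => ?_⟩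
  · refine ((isCompact_closedBall (0 : ℂ) 1).image
      (f := fun c : ℂ => c • charS l) (by fun_prop)).closure_of_subset ?_
    rintro _ ⟨t, rfl⟩
    refine ⟨charR l t, ?_, ?_⟩
    · rw [mem_closedBall_zero_iff, charR_apply,
        show I * (l : ℂ) * t = ((l * t : ℝ) : ℂ) * I by push_cast; ring,
        Complex.norm_exp_ofReal_mul_I]
    · ext z
      rw [translateS_apply, charS_stripShift]
      rfl
  · by_contra hmΓ
    refine hm (bohrCoeffR_eq_of_tendsto ?_)
    rw [twist_charS]
    exact tendsto_symmAverage_charR (sub_ne_zero.2 fun h => hmΓ (h ▸ hl))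

lemma banachMean_charR_mul_restrictLine {f : stripSet →ᵇ ℂ}
    (hf : DifferentiableOn ℂ (stripExt f) stripO) (l : ℝ) (z : stripSet) :
    banachMean (charR l * restrictLine z f) = banachMean (twist (-l) f) * charS (-l) z := by
  have hg : DifferentiableOn ℂ (stripExt (charS l * f)) stripO := by
    refine ((differentiableOn_charS l).mul hf).congr fun z hz => ?_
    rw [Pi.mul_apply]
    simp only [stripExt_of_mem _ (stripO_subset hz)]
    rfl
  have h1 : ∀ w, restrictLine w (charS l * f) = charS l w • (charR l * restrictLine w f) := by
    intro w
    ext t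
    rw [restrictLine_apply, BoundedContinuousFunction.coe_mul, Pi.mul_apply, charS_stripShift,
      BoundedContinuousFunction.smul_apply, BoundedContinuousFunction.coe_mul, Pi.mul_apply,
      restrictLine_apply, smul_eq_mul]
    ring
  have h2 := banachMean_restrictLine hg z
  have h3 : charS l (realPt 0) = 1 := by simp [charS_apply, realPt]
  have h4 : charS (-l) z * charS l z = 1 := by
    rw [charS_apply, charS_apply, ← Complex.exp_add]
    simp
  rw [h1, h1, map_smul, map_smul, h3, one_smul, smul_eq_mul] at h2
  rw [twist_eq, neg_neg, ← h2]
  linear_combination (-banachMean (charR l * restrictLine z f)) * h4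

lemma exists_smoothing_mem_span {f : stripSet →ᵇ ℂ} (hf : DifferentiableOn ℂ (stripExt f) stripO)
    {k : ℝ →ᵇ ℂ} (hk : k ∈ trigPoly) :
    ∃ g ∈ Submodule.span ℂ (Set.range charS), ∀ z, g z = banachMean (k * restrictLine z f) := by
  induction hk using Submodule.span_induction with
  | mem x hx =>
    obtain ⟨l, rfl⟩ := hx
    exact ⟨banachMean (twist (-l) f) • charS (-l),
      Submodule.smul_mem _ _ (Submodule.subset_span ⟨-l, rfl⟩),
      fun z => (banachMean_charR_mul_restrictLine hf l z).symm⟩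
  | zero => exact ⟨0, Submodule.zero_mem _, fun z => by simp⟩
  | add x y _ _ hx hy =>
    obtain ⟨g, hg, hgz⟩ := hx
    obtain ⟨g', hg', hgz'⟩ := hy
    refine ⟨g + g', Submodule.add_mem _ hg hg', fun z => ?_⟩
    rw [add_mul, map_add, ← hgz, ← hgz']
    rfl
  | smul c x _ hx =>
    obtain ⟨g, hg, hgz⟩ := hx
    refine ⟨c • g, Submodule.smul_mem _ _ hg, fun z => ?_⟩
    rw [smul_mul_assoc, map_smul, ← hgz]
    rfl

lemma norm_banachMean_mul_restrictLine_le {k : ℝ →ᵇ ℂ} (hk : ∀ t, ‖k t‖ ≤ (k t).re)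
    (hk1 : banachMean k = 1) (f : stripSet →ᵇ ℂ) (z : stripSet) :
    ‖banachMean (k * restrictLine z f)‖ ≤ ‖f‖ := by
  have h := norm_banachMean_le_re (f := k * restrictLine z f) (g := (‖f‖ : ℂ) • k) fun t => by
    rw [BoundedContinuousFunction.coe_mul, Pi.mul_apply, norm_mul,
      BoundedContinuousFunction.smul_apply, smul_eq_mul, Complex.re_ofReal_mul, mul_comm]
    exact mul_le_mul (norm_restrictLine_apply_le z f t) (hk t) (norm_nonneg _) (norm_nonneg _)
  rwa [map_smul, hk1, smul_eq_mul, mul_one, Complex.ofReal_re] at h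

/-- A common approximate identity for finitely many almost periodic functions. -/
lemma exists_kernel_approx (s : Finset (stripSet →ᵇ ℂ)) (hs : ∀ f ∈ s, IsBohrAP f) {ε : ℝ}
    (hε : 0 < ε) :
    ∃ k ∈ trigPoly, (∀ t, ‖k t‖ ≤ (k t).re) ∧ banachMean k = 1 ∧
      ∀ f ∈ s, ∀ z, ‖banachMean (k * restrictLine z f) - f z‖ ≤ ε := by
  classical
  obtain ⟨Λ, δ, hδ, hΛ⟩ : ∃ (Λ : Finset ℝ) (δ : ℝ), 0 < δ ∧ ∀ f ∈ s, ∀ t : ℝ,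
      (∀ l ∈ Λ, ‖Complex.exp (I * l * t) - 1‖ < δ) → dist (translateS f t) f < ε / 2 := by
    induction s using Finset.induction_on with
    | empty => exact ⟨∅, 1, one_pos, by simp⟩
    | insert f s _ ih =>
      obtain ⟨Λ, δ, hδ, h⟩ := ih fun g hg => hs g (Finset.mem_insert_of_mem hg)
      obtain ⟨Λ', δ', hδ', h'⟩ := hs f (Finset.mem_insert_self _ _) (ε / 2) (by positivity)
      refine ⟨Λ ∪ Λ', min δ δ', lt_min hδ hδ', fun g hg t ht => ?_⟩
      rcases Finset.mem_insert.1 hg with rfl | hg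
      · exact h' t fun l hl => (ht l (Finset.mem_union_right _ hl)).trans_le (min_le_right _ _)
      · exact h g hg t
          fun l hl => (ht l (Finset.mem_union_left _ hl)).trans_le (min_le_left _ _)
  set C : ℝ := ∑ f ∈ s, ‖f‖ with hC
  have hC0 : 0 ≤ C := Finset.sum_nonneg fun _ _ => norm_nonneg _
  have hfC : ∀ f ∈ s, ‖f‖ ≤ C := fun f hf =>
    Finset.single_le_sum (f := fun f => ‖f‖) (fun _ _ => norm_nonneg _) hf
  obtain ⟨k, hk, hkre, hk1, hkη⟩ := exists_trigPoly_kernel Λ hδ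
    (η := ε / (4 * (C + 1))) (by positivity)
  refine ⟨k, hk, hkre, hk1, fun f hf z => ?_⟩
  have h1 : f z = banachMean (k * BoundedContinuousFunction.const ℝ (f z)) := by
    have : k * BoundedContinuousFunction.const ℝ (f z) = f z • k := by
      ext t
      simp [mul_comm]
    rw [this, map_smul, hk1, smul_eq_mul, mul_one]
  have h2 : banachMean (k * restrictLine z f) - f z
      = banachMean (k * (restrictLine z f - BoundedContinuousFunction.const ℝ (f z))) := by
    rw [mul_sub, map_sub, ← h1]
  rw [h2]
  have h3 := norm_banachMean_le_re
    (f := k * (restrictLine z f - BoundedContinuousFunction.const ℝ (f z)))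
    (g := ((ε / 2 : ℝ) : ℂ) • k + BoundedContinuousFunction.const ℝ ((ε / 2 : ℝ) : ℂ)) fun t => by
      rw [BoundedContinuousFunction.coe_mul, Pi.mul_apply, norm_mul,
        BoundedContinuousFunction.coe_add, Pi.add_apply,
        BoundedContinuousFunction.smul_apply, smul_eq_mul, Complex.add_re, Complex.re_ofReal_mul,
        BoundedContinuousFunction.const_apply, Complex.ofReal_re, BoundedContinuousFunction.coe_sub,
        Pi.sub_apply, BoundedContinuousFunction.const_apply, restrictLine_apply]
      have hk0 : 0 ≤ (k t).re := (norm_nonneg _).trans (hkre t)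
      by_cases ht : ∀ l ∈ Λ, ‖Complex.exp (I * l * t) - 1‖ < δ
      · have h4 : ‖f (stripShift t z) - f z‖ ≤ ε / 2 := by
          rw [← dist_eq_norm]
          exact (BoundedContinuousFunction.dist_coe_le_dist z).trans (hΛ f hf t ht).le
        nlinarith [norm_nonneg (k t), norm_nonneg (f (stripShift t z) - f z), hkre t]
      · push Not at ht
        have h5 := hkη t ht
        have h6 : ‖f (stripShift t z) - f z‖ ≤ 2 * C := by
          have h7 := f.norm_coe_le_norm (stripShift t z)
          have h8 := f.norm_coe_le_norm z
          have h9 := norm_sub_le (f (stripShift t z)) (f z)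
          linarith [hfC f hf]
        have h7 : ‖k t‖ * ‖f (stripShift t z) - f z‖ ≤ ε / (4 * (C + 1)) * (2 * C) := by gcongr
        have h8 : ε / (4 * (C + 1)) * (2 * C) ≤ ε / 2 := by
          rw [div_mul_eq_mul_div, div_le_div_iff₀ (by positivity) (by positivity)]
          nlinarith
        have : 0 ≤ ε / 2 * (k t).re := by positivity
        linarith
  rw [map_add, map_smul, hk1, banachMean_const, smul_eq_mul, mul_one, ← Complex.ofReal_add,
    Complex.ofReal_re, add_halves] at h3
  exact h3

lemma bohrHol_le_closure_span :
    bohrHol ≤ (Submodule.span ℂ (Set.range charS)).topologicalClosure := by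
  intro f hf
  refine Metric.mem_closure_iff.2 fun ε hε => ?_
  obtain ⟨k, hk, -, -, hkf⟩ := exists_kernel_approx {f} (by simpa using hf.2) (half_pos hε)
  obtain ⟨g, hg, hgz⟩ := exists_smoothing_mem_span hf.1 hk
  refine ⟨g, hg, lt_of_le_of_lt ?_ (half_lt_self hε)⟩
  rw [dist_comm, BoundedContinuousFunction.dist_le (half_pos hε).le]
  intro z
  rw [dist_eq_norm, hgz]
  exact hkf f (Finset.mem_singleton_self f) z

lemma tendsto_symmAverage_twist {f : stripSet →ᵇ ℂ} (hf : f ∈ bohrHol) (l : ℝ) :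
    Tendsto (symmAverage (twist l f)) atTop (𝓝 (banachMean (twist l f))) := by
  refine tendsto_symmAverage_of_mem_closure ?_
  refine map_mem_closure (twist l).continuous (bohrHol_le_closure_span hf) fun g hg => ?_
  induction hg using Submodule.span_induction with
  | mem x hx =>
    obtain ⟨m, rfl⟩ := hx
    rw [twist_charS]
    exact Submodule.subset_span ⟨m - l, rfl⟩
  | zero => simp
  | add x y _ _ hx hy => rw [map_add]; exact trigPoly.add_mem hx hy
  | smul c x _ hx => rw [map_smul]; exact trigPoly.smul_mem c hx

/-- Elements of the closed span of `APH_Γ` have no Bohr–Fourier coefficients outside `Γ`. -/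
lemma banachMean_twist_eq_zero {Γ : Set ℝ} {l : ℝ} (hl : l ∉ Γ) {f : stripSet →ᵇ ℂ}
    (hf : f ∈ (Submodule.span ℂ (APHset Γ)).topologicalClosure) :
    banachMean (twist l f) = 0 := by
  have h : (Submodule.span ℂ (APHset Γ)).topologicalClosure
      ≤ LinearMap.ker (banachMean.comp (twist l) : (stripSet →ᵇ ℂ) →ₗ[ℂ] ℂ) := by
    refine Submodule.topologicalClosure_minimal _ (Submodule.span_le.2 fun g hg => ?_)
      (banachMean.comp (twist l)).isClosed_ker
    have h1 := bohrCoeffR_eq_of_tendsto (tendsto_symmAverage_twist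
      (closure_span_le_bohrHol Γ (Submodule.le_topologicalClosure _ (Submodule.subset_span hg))) l)
    have h2 : bohrCoeffR (fun x : ℝ => g (realPt x)) l = 0 := by
      by_contra h3
      exact hl (hg.2 h3)
    exact h1.symm.trans h2
  exact h hf

/-- Convolution with a trigonometric polynomial is a finite rank operator. -/
lemma exists_finiteRank_smoothing (Γ : Set ℝ) {k : ℝ →ᵇ ℂ} (hk : k ∈ trigPoly) :
    ∃ T : (Submodule.span ℂ (APHset Γ)).topologicalClosure →L[ℂ]
        (Submodule.span ℂ (APHset Γ)).topologicalClosure,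
      FiniteDimensional ℂ (LinearMap.range T.toLinearMap) ∧
      ∀ f z, (T f : stripSet →ᵇ ℂ) z = banachMean (k * restrictLine z f) := by
  induction hk using Submodule.span_induction with
  | mem x hx =>
    obtain ⟨l, rfl⟩ := hx
    have hform : ∀ (f : (Submodule.span ℂ (APHset Γ)).topologicalClosure) (z : stripSet),
        banachMean (charR l * restrictLine z f)
          = banachMean (twist (-l) f) * charS (-l) z := fun f z =>
      banachMean_charR_mul_restrictLine (closure_span_le_bohrHol Γ f.2).1 l z
    by_cases hl : -l ∈ Γ
    · have hmem : charS (-l) ∈ (Submodule.span ℂ (APHset Γ)).topologicalClosure :=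
        Submodule.le_topologicalClosure _ (Submodule.subset_span (charS_mem_APHset hl))
      refine ⟨((banachMean.comp (twist (-l))).comp (Submodule.subtypeL _)).smulRight
        ⟨charS (-l), hmem⟩, ?_, fun f z => (hform f z).symm⟩
      refine Submodule.finiteDimensional_of_le
        (S₂ := Submodule.span ℂ {⟨charS (-l), hmem⟩}) ?_
      rintro _ ⟨f, rfl⟩
      exact Submodule.smul_mem _ _ (Submodule.mem_span_singleton_self _)
    · refine ⟨0, ?_, fun f z => ?_⟩
      · rw [ContinuousLinearMap.toLinearMap_zero, LinearMap.range_zero]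
        infer_instance
      · rw [hform, banachMean_twist_eq_zero hl f.2, zero_mul]
        rfl
  | zero =>
    refine ⟨0, ?_, fun f z => ?_⟩
    · rw [ContinuousLinearMap.toLinearMap_zero, LinearMap.range_zero]
      infer_instance
    · simp
  | add x y _ _ hx hy =>
    obtain ⟨T, hT, hTz⟩ := hx
    obtain ⟨T', hT', hTz'⟩ := hy
    refine ⟨T + T', ?_, fun f z => ?_⟩
    · rw [ContinuousLinearMap.toLinearMap_add]
      exact Submodule.finiteDimensional_of_le (LinearMap.range_add_le _ _)
    · rw [add_mul, map_add, ← hTz, ← hTz']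
      rfl
  | smul c x _ hx =>
    obtain ⟨T, hT, hTz⟩ := hx
    refine ⟨c • T, ?_, fun f z => ?_⟩
    · refine Submodule.finiteDimensional_of_le
        (S₂ := LinearMap.range T.toLinearMap) ?_
      rintro _ ⟨f, rfl⟩
      exact Submodule.smul_mem _ c ⟨f, rfl⟩
    · rw [smul_mul_assoc, map_smul, ← hTz]
      rfl

end SAP

theorem stmt1 (Γ : Set ℝ) (hΓ : SAP.IsUnitalSemigroup Γ) :
    SAP.HasApproxProperty ↥((Submodule.span ℂ (SAP.APHset Γ)).topologicalClosure) := by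
  classical
  intro K hK ε hε
  obtain ⟨N, hNK, hNf, hN⟩ := hK.finite_cover_balls (e := ε / 4) (by positivity)
  obtain ⟨k, hk, hkre, hk1, hkN⟩ := SAP.exists_kernel_approx
    (hNf.toFinset.image Subtype.val) (fun f hf => by
      obtain ⟨g, -, rfl⟩ := Finset.mem_image.1 hf
      exact (SAP.closure_span_le_bohrHol Γ g.2).2) (ε := ε / 4) (by positivity)
  obtain ⟨T, hT, hTz⟩ := SAP.exists_finiteRank_smoothing Γ hk
  refine ⟨T, hT, fun x hx => ?_⟩
  have hTn : ∀ f, ‖T f‖ ≤ ‖f‖ := fun f => by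
    refine (BoundedContinuousFunction.norm_le (norm_nonneg _)).2 fun z => ?_
    change ‖(T f : SAP.stripSet →ᵇ ℂ) z‖ ≤ _
    rw [hTz]
    exact SAP.norm_banachMean_mul_restrictLine_le hkre hk1 f z
  obtain ⟨y, hy, hxy⟩ := Set.mem_iUnion₂.1 (hN hx)
  rw [Metric.mem_ball, dist_eq_norm] at hxy
  have hTy : ‖T y - y‖ ≤ ε / 4 := by
    refine (BoundedContinuousFunction.norm_le (by positivity)).2 fun z => ?_
    change ‖(T y : SAP.stripSet →ᵇ ℂ) z - (y : SAP.stripSet →ᵇ ℂ) z‖ ≤ _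
    rw [hTz]
    exact hkN y (Finset.mem_image_of_mem _ (hNf.mem_toFinset.2 hy)) z
  have h1 : T x - x = T (x - y) + (T y - y) - (x - y) := by
    rw [map_sub]
    abel
  calc ‖T x - x‖ ≤ ‖T (x - y)‖ + ‖T y - y‖ + ‖x - y‖ := by
        rw [h1]
        exact (norm_sub_le _ _).trans (by gcongr; exact norm_add_le _ _)
    _ < ε := by linarith [hTn (x - y)]
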